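/- Shortcutting cannot increase the Fréchet distance to a line segment: let Q : [0,1] → ℝ^d be a linearly parametrized line segment and P : [0,1] → ℝ^d any continuous curve, and let S be the linearly parametrized line segment from P(0) to P(1). Then d_F(Q, S) ≤ d_F(Q, P). -/

import Mathlib

/-!
Every reparametrization fixes `0` and `1`, so every matching of two curves pairs their starting
points and their endpoints; the Fréchet distance is therefore at least the larger of the two
endpoint distances. Between two segments it is at most that number, because the linear matching is
farthest apart at an endpoint, by convexity of the norm.
-/

open Set

noncomputable section

/-- Points in `ℝ^d`. -/
abbrev Pt (d : ℕ) : Type := EuclideanSpace ℝ (Fin d)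

/-- A reparametrization: a continuous strictly increasing bijection of `[0,1]` onto itself. -/
def IsReparam (γ : ℝ → ℝ) : Prop :=
  ContinuousOn γ (Icc 0 1) ∧ StrictMonoOn γ (Icc 0 1) ∧ γ '' Icc 0 1 = Icc 0 1

/-- The Fréchet distance `d_F(P,Q) = inf_γ sup_{t ∈ [0,1]} ‖P(γ(t)) - Q(t)‖`
(only the values of the curves on `[0,1]` are relevant). -/
def frechetDist {d : ℕ} (P Q : ℝ → Pt d) : ℝ :=
  ⨅ γ : {γ : ℝ → ℝ // IsReparam γ}, ⨆ s : Icc (0:ℝ) 1, ‖P (γ.1 s.1) - Q s.1‖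

/-- The linearly parametrized line segment from `a` to `b`. -/
def seg {d : ℕ} (a b : Pt d) : ℝ → Pt d := fun s => (1 - s) • a + s • b

/-- The subcurve `P[a,b]` of `P`, linearly reparametrized over `[0,1]`. -/
def subcurve {d : ℕ} (P : ℝ → Pt d) (a b : ℝ) : ℝ → Pt d := fun s => P (a + s * (b - a))

/-- The polygonal curve with vertex sequence `pts 0, …, pts n`, uniformly
parametrized over `[0,1]`. -/
def polyline {d n : ℕ} (pts : Fin (n + 1) → Pt d) : ℝ → Pt d := fun s =>
  if h : n = 0 then pts 0
  else
    let i : ℕ := min ⌊s * n⌋₊ (n - 1)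
    have hi : i < n := lt_of_le_of_lt (min_le_right _ _) (by omega)
    (1 - (s * n - i)) • pts ⟨i, hi.trans n.lt_succ_self⟩ +
      (s * n - i) • pts ⟨i + 1, Nat.succ_lt_succ hi⟩

/-- `f ∈ 𝕏^d_ℓ`: `f` is a polygonal curve with at most `ℓ` vertices. -/
def IsPolygonal {d : ℕ} (f : ℝ → Pt d) (ℓ : ℕ) : Prop :=
  ∃ n : ℕ, n + 1 ≤ ℓ ∧ ∃ pts : Fin (n + 1) → Pt d, f = polyline pts

/-- Concatenation of two curves (each parametrized over `[0,1]`). -/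
def concat {d : ℕ} (f g : ℝ → Pt d) : ℝ → Pt d := fun s =>
  if s ≤ 1 / 2 then f (2 * s) else g (2 * s - 1)

/-- `CostLE P m t C Δ` states that the clustering cost satisfies `φ(P,C) ≤ Δ`:
there is a family `I` of index pairs `(i,j)`, `1 ≤ i < j ≤ m`, with
`⋃_{(i,j) ∈ I} [t i, t j] = [0,1]`, such that every corresponding subcurve is
within Fréchet distance `Δ` of some center in `C`. -/
def CostLE {d : ℕ} (P : ℝ → Pt d) (m : ℕ) (t : ℕ → ℝ) (C : Set (ℝ → Pt d)) (Δ : ℝ) : Prop :=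
  ∃ I : Set (ℕ × ℕ),
    (∀ q ∈ I, 1 ≤ q.1 ∧ q.1 < q.2 ∧ q.2 ≤ m) ∧
    (⋃ q ∈ I, Icc (t q.1) (t q.2)) = Icc (0:ℝ) 1 ∧
    ∀ q ∈ I, ∃ c ∈ C, frechetDist (subcurve P (t q.1) (t q.2)) c ≤ Δ

/-- The set `r_Q` of the set system `R` (ground set `{1,…,m−1}`):
`r_Q = {z : ∃ i ≤ z < j, d_F(Q, P[t_i,t_j]) ≤ Δ}`. -/
def rSet {d : ℕ} (P : ℝ → Pt d) (m : ℕ) (t : ℕ → ℝ) (Δ : ℝ) (Q : ℝ → Pt d) : Set ℕ :=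
  {z | 1 ≤ z ∧ z < m ∧ ∃ i j, 1 ≤ i ∧ i ≤ z ∧ z < j ∧ j ≤ m ∧
    frechetDist Q (subcurve P (t i) (t j)) ≤ Δ}

namespace IsReparam

theorem id : IsReparam (fun t => t) :=
  ⟨continuousOn_id, strictMonoOn_id, image_id _⟩

variable {γ : ℝ → ℝ}

theorem mapsTo (hγ : IsReparam γ) : MapsTo γ (Icc 0 1) (Icc 0 1) :=
  mapsTo_iff_image_subset.2 hγ.2.2.subset

theorem map_zero (hγ : IsReparam γ) : γ 0 = 0 := by
  have zero_mem : (0 : ℝ) ∈ Icc (0 : ℝ) 1 := left_mem_Icc.2 zero_le_one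
  obtain ⟨t, ht, hγt⟩ := hγ.2.2.superset zero_mem
  exact le_antisymm ((hγ.2.1.monotoneOn zero_mem ht ht.1).trans_eq hγt) (hγ.mapsTo zero_mem).1

theorem map_one (hγ : IsReparam γ) : γ 1 = 1 := by
  have one_mem : (1 : ℝ) ∈ Icc (0 : ℝ) 1 := right_mem_Icc.2 zero_le_one
  obtain ⟨t, ht, hγt⟩ := hγ.2.2.superset one_mem
  exact le_antisymm (hγ.mapsTo one_mem).2 (hγt.ge.trans (hγ.2.1.monotoneOn ht one_mem ht.2))

end IsReparam

section

variable {d : ℕ}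

theorem frechetDist_le {P Q : ℝ → Pt d} {γ : ℝ → ℝ} {r : ℝ} (hγ : IsReparam γ)
    (h : ∀ s ∈ Icc (0 : ℝ) 1, ‖P (γ s) - Q s‖ ≤ r) : frechetDist P Q ≤ r := by
  have bddBelow : BddBelow (range fun γ : {γ : ℝ → ℝ // IsReparam γ} =>
      ⨆ s : Icc (0 : ℝ) 1, ‖P (γ.1 s.1) - Q s.1‖) :=
    ⟨0, forall_mem_range.2 fun _ => Real.iSup_nonneg fun _ => norm_nonneg _⟩
  exact ciInf_le_of_le bddBelow ⟨γ, hγ⟩ (ciSup_le fun s => h s s.2)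

/-- Without this bound the supremum in `frechetDist` would take the junk value `0`. -/
theorem bddAbove_range_norm_sub {P Q : ℝ → Pt d} {γ : ℝ → ℝ} (hγ : IsReparam γ)
    (hP : Bornology.IsBounded (P '' Icc 0 1)) (hQ : Bornology.IsBounded (Q '' Icc 0 1)) :
    BddAbove (range fun s : Icc (0 : ℝ) 1 => ‖P (γ s) - Q s‖) := by
  obtain ⟨C, hC⟩ := (hP.sub hQ).exists_norm_le
  exact ⟨C, forall_mem_range.2 fun s => hC _ <|
    sub_mem_sub (mem_image_of_mem P (hγ.mapsTo s.2)) (mem_image_of_mem Q s.2)⟩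

theorem max_norm_sub_endpoints_le_frechetDist {P Q : ℝ → Pt d}
    (hP : Bornology.IsBounded (P '' Icc 0 1)) (hQ : Bornology.IsBounded (Q '' Icc 0 1)) :
    max ‖P 0 - Q 0‖ ‖P 1 - Q 1‖ ≤ frechetDist P Q := by
  have : Nonempty {γ : ℝ → ℝ // IsReparam γ} := ⟨⟨_, IsReparam.id⟩⟩
  refine le_ciInf fun ⟨γ, hγ⟩ => max_le ?_ ?_
  · simpa only [hγ.map_zero] using
      le_ciSup (bddAbove_range_norm_sub hγ hP hQ) ⟨0, left_mem_Icc.2 zero_le_one⟩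
  · simpa only [hγ.map_one] using
      le_ciSup (bddAbove_range_norm_sub hγ hP hQ) ⟨1, right_mem_Icc.2 zero_le_one⟩

theorem seg_zero (a b : Pt d) : seg a b 0 = a := by simp [seg]

theorem seg_one (a b : Pt d) : seg a b 1 = b := by simp [seg]

theorem seg_sub_seg (u v a b : Pt d) (s : ℝ) :
    seg u v s - seg a b s = seg (u - a) (v - b) s := by
  simp only [seg]
  module

theorem seg_mem_segment (a b : Pt d) {s : ℝ} (hs : s ∈ Icc (0 : ℝ) 1) :
    seg a b s ∈ segment ℝ a b :=
  ⟨1 - s, s, sub_nonneg.2 hs.2, hs.1, sub_add_cancel 1 s, rfl⟩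

theorem continuous_seg (a b : Pt d) : Continuous (seg a b) := by
  unfold seg
  fun_prop

theorem frechetDist_seg_seg_le (u v a b : Pt d) :
    frechetDist (seg u v) (seg a b) ≤ max ‖u - a‖ ‖v - b‖ :=
  frechetDist_le IsReparam.id fun s hs => by
    rw [seg_sub_seg]
    exact convexOn_univ_norm.le_max_of_mem_segment (mem_univ _) (mem_univ _)
      (seg_mem_segment _ _ hs)

theorem frechetDist_shortcut_general {P Q : ℝ → Pt d}
    (hP : Bornology.IsBounded (P '' Icc 0 1)) (hQ : Bornology.IsBounded (Q '' Icc 0 1)) :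
    frechetDist (seg (P 0) (P 1)) (seg (Q 0) (Q 1)) ≤ frechetDist P Q :=
  (frechetDist_seg_seg_le _ _ _ _).trans (max_norm_sub_endpoints_le_frechetDist hP hQ)

end

/-- Shortcutting cannot increase the Fréchet distance to a line segment. -/
theorem frechetDist_shortcut {d : ℕ} (u v : Pt d) (P : ℝ → Pt d)
    (hP : ContinuousOn P (Icc 0 1)) :
    frechetDist (seg u v) (seg (P 0) (P 1)) ≤ frechetDist (seg u v) P := by
  simpa only [seg_zero, seg_one] using frechetDist_shortcut_general
    (isCompact_Icc.image (continuous_seg u v)).isBounded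
    (isCompact_Icc.image_of_continuousOn hP).isBounded
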